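/- For every number of types k ≥ 3 and every intolerance parameter τ ∈ (0,1), there exist a finite simple graph G = (V,E), a set A of agents with |A| = |V| partitioned into k types, and a bijective placement p₀ : A → V such that no finite sequence of improving swaps of the one-versus-all swap Schelling game (1-k-SSG) with parameter τ starting from p₀ ends in a swap-stable placement; in particular, the 1-k-SSG with k > 2 is not weakly acyclic on arbitrary networks. -/

import Mathlib

open Finset
open scoped Classical

noncomputable section

namespace Schelling

variable {V A : Type*} [Fintype V] [Fintype A] {k : ℕ}

/-- The set of neighbors of agent `a` under placement `p`. -/
def nbrs (G : SimpleGraph V) (p : A → V) (a : A) : Finset A :=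
  Finset.univ.filter fun b => G.Adj (p a) (p b)

/-- `|N⁺_p(a)|`: the number of neighbors of `a` under `p` having the same type as `a`. -/
def posCount (G : SimpleGraph V) (t : A → Fin k) (p : A → V) (a : A) : ℕ :=
  (Finset.univ.filter fun b => G.Adj (p a) (p b) ∧ t b = t a).card

/-- One-versus-all `|N⁻_p(a)|`: the number of neighbors of `a` whose type differs from `t a`. -/
def negCountAll (G : SimpleGraph V) (t : A → Fin k) (p : A → V) (a : A) : ℕ :=
  (Finset.univ.filter fun b => G.Adj (p a) (p b) ∧ t b ≠ t a).card

/-- One-versus-one `|N⁻_p(a)|`: the size of a largest set of neighbors of `a`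
of one common type different from `t a`. -/
def negCountOne (G : SimpleGraph V) (t : A → Fin k) (p : A → V) (a : A) : ℕ :=
  (Finset.univ.filter fun T : Fin k => T ≠ t a).sup fun T =>
    (Finset.univ.filter fun b => G.Adj (p a) (p b) ∧ t b = T).card

/-- The cost of agent `a` in the one-versus-all version. -/
def costAll (G : SimpleGraph V) (t : A → Fin k) (τ : ℝ) (p : A → V) (a : A) : ℝ :=
  if nbrs G p a = ∅ then τ
  else max 0 (τ - (posCount G t p a : ℝ) /
    ((posCount G t p a : ℝ) + (negCountAll G t p a : ℝ)))

/-- The cost of agent `a` in the one-versus-one version. -/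
def costOne (G : SimpleGraph V) (t : A → Fin k) (τ : ℝ) (p : A → V) (a : A) : ℝ :=
  if nbrs G p a = ∅ then τ
  else max 0 (τ - (posCount G t p a : ℝ) /
    ((posCount G t p a : ℝ) + (negCountOne G t p a : ℝ)))

/-- A swap of the (distinct) agents `a` and `b` turning placement `p` into `q`,
which strictly decreases the cost of both agents (cost function `c`). -/
def SwapMove (c : (A → V) → A → ℝ) (p q : A → V) (a b : A) : Prop :=
  a ≠ b ∧ q = p ∘ (Equiv.swap a b) ∧ c q a < c p a ∧ c q b < c p b

/-- `q` is obtained from `p` by an improving swap. -/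
def ImprovingSwap (c : (A → V) → A → ℝ) (p q : A → V) : Prop :=
  ∃ a b, SwapMove c p q a b

/-- A placement is swap-stable if it admits no improving swap. -/
def SwapStable (c : (A → V) → A → ℝ) (p : A → V) : Prop :=
  ∀ q, ¬ ImprovingSwap c p q

/-- Some finite sequence of improving swaps starting at `p₀` ends in a swap-stable placement. -/
def ReachesStableSwap (c : (A → V) → A → ℝ) (p₀ : A → V) : Prop :=
  ∃ (n : ℕ) (q : ℕ → A → V), q 0 = p₀ ∧
    (∀ i < n, ImprovingSwap c (q i) (q (i + 1))) ∧ SwapStable c (q n)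

/-- A jump of agent `a` to the node `v` (unoccupied under `p`) turning placement `p`
into `q`, which strictly decreases the cost of `a` (cost function `c`). -/
def JumpMove (c : (A → V) → A → ℝ) (p q : A → V) (a : A) (v : V) : Prop :=
  (∀ b, p b ≠ v) ∧ q = Function.update p a v ∧ c q a < c p a

/-- `q` is obtained from `p` by an improving jump. -/
def ImprovingJump (c : (A → V) → A → ℝ) (p q : A → V) : Prop :=
  ∃ a v, JumpMove c p q a v

/-- A placement is jump-stable if it admits no improving jump. -/
def JumpStable (c : (A → V) → A → ℝ) (p : A → V) : Prop :=
  ∀ q, ¬ ImprovingJump c p q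

/-- Some finite sequence of improving jumps starting at `p₀` ends in a jump-stable placement. -/
def ReachesStableJump (c : (A → V) → A → ℝ) (p₀ : A → V) : Prop :=
  ∃ (n : ℕ) (q : ℕ → A → V), q 0 = p₀ ∧
    (∀ i < n, ImprovingJump c (q i) (q (i + 1))) ∧ JumpStable c (q n)

/-- The placement cost: the number of discontent agents (one-versus-all cost). -/
def placementCost (G : SimpleGraph V) (t : A → Fin k) (τ : ℝ) (p : A → V) : ℕ :=
  (Finset.univ.filter fun a => costAll G t τ p a ≠ 0).card

/-- A graph is `Δ`-regular if every node has exactly `Δ` neighbors. -/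
def IsRegular (G : SimpleGraph V) (Δ : ℕ) : Prop :=
  ∀ v : V, (Finset.univ.filter fun u => G.Adj v u).card = Δ

/-!
Let `j` range over an odd cycle with rotation `π`. The two agents of pair `j`, of two different
types, sit on the nodes `(j, false)` and `(j, true)`, and `(j, false)` is adjacent to
`(π j, true)`. Agents that never move, placed on large monochromatic cliques, pad the
neighborhoods so that with `d = M j + 3` an agent at `(j, false)` has utility `1 / d` or `2 / d`
and an agent at `(j, true)` has utility `4 / (3 * d)` or `5 / (3 * d)`, the larger value occurring
when its neighbor in the gadget has its own type. Since `1 < 4 / 3 < 5 / 3 < 2`, an agent prefers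
`(j, false)` exactly when it meets its own type there.

The scales `1 / d` of different pairs differ by a factor of at least `2`, so of two agents from
different pairs one does not gain by a swap, and only the agents of one pair ever trade places.
Each configuration is thus a map `x : ι → Bool`, and pair `j` can swap as soon as
`x (π j) = x j`. As an odd cycle has no proper 2-coloring, some pair can always swap. Taking
`2 / d < τ` keeps all the moving agents discontent.
-/

section Trap

variable {X Y X' Y' : Type*} {c : (X → Y) → X → ℝ} {c' : (X' → Y') → X' → ℝ} {P : Set (X → Y)}

/-- A set of placements closed under improving swaps and free of swap-stable placements: once
inside, the swap dynamics never comes to rest. -/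
def IsTrap (c : (X → Y) → X → ℝ) (P : Set (X → Y)) : Prop :=
  ∀ p ∈ P, ¬ SwapStable c p ∧ ∀ q, ImprovingSwap c p q → q ∈ P

/-- `SwapMove` decides equality of agents classically; this form fits any other instance. -/
lemma improvingSwap_iff [DecidableEq X] {p q : X → Y} :
    ImprovingSwap c p q ↔
      ∃ a b, a ≠ b ∧ q = p ∘ Equiv.swap a b ∧ c q a < c p a ∧ c q b < c p b := by
  unfold ImprovingSwap SwapMove
  convert Iff.rfl

lemma IsTrap.not_reachesStableSwap (hP : IsTrap c P) {p : X → Y} (hp : p ∈ P) :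
    ¬ ReachesStableSwap c p := by
  rintro ⟨n, q, rfl, hstep, hstable⟩
  have hmem : ∀ i ≤ n, q i ∈ P := by
    intro i
    induction i with
    | zero => exact fun _ => hp
    | succ i ih => exact fun hi => (hP _ (ih (by lia))).2 _ (hstep i hi)
  exact (hP _ (hmem n le_rfl)).1 hstable

lemma improvingSwap_image_iff [DecidableEq X] [DecidableEq X'] (φ : X ↪ X') (F : (X → Y) → X' → Y')
    (hcost : ∀ p a, c' (F p) (φ a) = c p a)
    (hswap : ∀ p a b, F p ∘ Equiv.swap (φ a) (φ b) = F (p ∘ Equiv.swap a b))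
    (hopt : ∀ p, ∀ b ∉ Set.range φ, ∀ q', c' (F p) b ≤ c' q' b) (p : X → Y) (q' : X' → Y') :
    ImprovingSwap c' (F p) q' ↔ ∃ q, ImprovingSwap c p q ∧ F q = q' := by
  simp only [improvingSwap_iff]
  constructor
  · rintro ⟨a', b', hab, rfl, ha, hb⟩
    obtain ⟨a, rfl⟩ : a' ∈ Set.range φ := by_contra fun h => ha.not_ge (hopt p a' h _)
    obtain ⟨b, rfl⟩ : b' ∈ Set.range φ := by_contra fun h => hb.not_ge (hopt p b' h _)
    simp only [hswap, hcost] at ha hb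
    exact ⟨_, ⟨a, b, fun h => hab (congrArg φ h), rfl, ha, hb⟩, (hswap p a b).symm⟩
  · rintro ⟨_, ⟨a, b, hab, rfl, ha, hb⟩, rfl⟩
    exact ⟨φ a, φ b, φ.injective.ne hab, (hswap p a b).symm, by simpa only [hcost],
      by simpa only [hcost]⟩

/-- The agents outside the range of `φ` never gain by a swap, so the two games have the same
improving swaps. -/
lemma IsTrap.image [DecidableEq X] [DecidableEq X'] (hP : IsTrap c P) (φ : X ↪ X')
    (F : (X → Y) → X' → Y')
    (hcost : ∀ p a, c' (F p) (φ a) = c p a)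
    (hswap : ∀ p a b, F p ∘ Equiv.swap (φ a) (φ b) = F (p ∘ Equiv.swap a b))
    (hopt : ∀ p, ∀ b ∉ Set.range φ, ∀ q', c' (F p) b ≤ c' q' b) :
    IsTrap c' (F '' P) := by
  have himp := improvingSwap_image_iff φ F hcost hswap hopt
  rintro _ ⟨p, hp, rfl⟩
  refine ⟨fun hstable => (hP p hp).1 fun q hq => ?_, fun q' hq' => ?_⟩
  · exact hstable (F q) ((himp p _).2 ⟨q, hq, rfl⟩)
  · obtain ⟨q, hq, rfl⟩ := (himp p q').1 hq'
    exact ⟨q, (hP p hp).2 q hq, rfl⟩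

end Trap

section Cost

variable {U U' A' : Type*} [Fintype A'] {G : SimpleGraph U} {t : A → Fin k} {τ : ℝ}
  {p : A → U} {a b : A}

lemma posCount_eq_card_filter_nbrs :
    posCount G t p a = #{b ∈ nbrs G p a | t b = t a} := by
  rw [posCount, nbrs, filter_filter]

lemma posCount_add_negCountAll :
    posCount G t p a + negCountAll G t p a = #(nbrs G p a) := by
  rw [posCount, negCountAll, nbrs, ← filter_filter, ← filter_filter,
    card_filter_add_card_filter_not]

/-- For an agent without neighbors the quotient is `0 / 0 = 0`, giving the cost `τ`. -/
lemma costAll_eq_max (hτ : 0 ≤ τ) :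
    costAll G t τ p a = max 0 (τ - (posCount G t p a : ℝ) / #(nbrs G p a)) := by
  rw [costAll, ← Nat.cast_add, posCount_add_negCountAll]
  split_ifs with h
  · simp [h, hτ]
  · rfl

lemma costAll_nonneg (hτ : 0 ≤ τ) : 0 ≤ costAll G t τ p a :=
  (le_max_left _ _).trans_eq (costAll_eq_max hτ).symm

lemma costAll_eq_zero (hτ : 0 ≤ τ) (hpos : 0 < posCount G t p a)
    (h : τ * negCountAll G t p a ≤ (1 - τ) * posCount G t p a) : costAll G t τ p a = 0 := by
  have hcard : (posCount G t p a + negCountAll G t p a : ℝ) = #(nbrs G p a) := by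
    exact_mod_cast posCount_add_negCountAll
  rw [costAll_eq_max hτ, max_eq_left]
  rw [sub_nonpos, ← hcard, le_div_iff₀ (by positivity)]
  linarith

lemma costAll_arrowCongr {G' : SimpleGraph U'} (f : G ≃g G') (e : A ≃ A') (t : A → Fin k) (τ : ℝ)
    (p : A → U) (a : A) :
    costAll G' (t ∘ e.symm) τ (e.arrowCongr f.toEquiv p) (e a) = costAll G t τ p a := by
  have hpos : posCount G t p a = posCount G' (t ∘ e.symm) (e.arrowCongr f.toEquiv p) (e a) :=
    card_equiv e (by simp [f.map_adj_iff])
  have hneg : negCountAll G t p a =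
      negCountAll G' (t ∘ e.symm) (e.arrowCongr f.toEquiv p) (e a) :=
    card_equiv e (by simp [f.map_adj_iff])
  have hnbrs : nbrs G' (e.arrowCongr f.toEquiv p) (e a) = (nbrs G p a).map e.toEmbedding := by
    ext b
    simp [nbrs, mem_map_equiv, f.map_adj_iff]
  simp only [costAll, hpos, hneg, hnbrs, map_eq_empty]

lemma IsTrap.arrowCongr {P : Set (A → U)} (hP : IsTrap (costAll G t τ) P) {G' : SimpleGraph U'}
    (f : G ≃g G') (e : A ≃ A') :
    IsTrap (costAll G' (t ∘ e.symm) τ) (e.arrowCongr f.toEquiv '' P) := by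
  refine hP.image e.toEmbedding _ (costAll_arrowCongr f e t τ) (fun p a b => ?_) (by simp)
  ext x
  simp [e.symm.injective.map_swap]

lemma nbrs_eq_singleton (hp : p.Injective) (h : ∀ v, G.Adj (p a) v ↔ v = p b) :
    nbrs G p a = {b} := by
  ext b'
  simp [nbrs, h, hp.eq_iff]

end Cost

section Anchor

variable {U : Type*} {G : SimpleGraph U} {w : U → Fin k → ℕ} {K : ℕ} {t : A → Fin k} {τ : ℝ}
  {p : A → U} {a : A}

/-- The graph `G` together with a clique of `K` nodes for each type, in which a node `u` of `G`
is joined to the first `w u i` nodes of the clique of type `i`. The clique nodes serve as anchors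
for agents that never move. -/
def anchoredGraph (G : SimpleGraph U) (w : U → Fin k → ℕ) (K : ℕ) :
    SimpleGraph (U ⊕ Fin k × Fin K) where
  Adj
    | .inl u, .inl v => G.Adj u v
    | .inl u, .inr x => x.2 < w u x.1
    | .inr x, .inl u => x.2 < w u x.1
    | .inr x, .inr y => x.1 = y.1 ∧ x.2 ≠ y.2
  symm := ⟨by
    rintro (u | x) (v | y) h
    exacts [h.symm, h, h, ⟨h.1.symm, h.2.symm⟩]⟩
  loopless := ⟨by
    rintro (u | x) h
    exacts [G.irrefl h, h.2 rfl]⟩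

/-- The type map of the free agents extended to the agents on the cliques of `anchoredGraph`. -/
def anchoredType (t : A → Fin k) (K : ℕ) : A ⊕ Fin k × Fin K → Fin k :=
  Sum.elim t Prod.fst

/-- The utility of a free agent in the anchored game, in terms of the data of the graph `G` on
which the free agents move. -/
def anchoredUtility (G : SimpleGraph U) (w : U → Fin k → ℕ) (t : A → Fin k) (p : A → U) (a : A) :
    ℝ :=
  (posCount G t p a + w (p a) (t a) : ℕ) / (#(nbrs G p a) + ∑ i, w (p a) i : ℕ)

lemma anchoredType_surjective {B : Type*} (t : B → Fin k) (hK : 0 < K) :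
    (anchoredType t K).Surjective :=
  fun i => ⟨.inr (i, ⟨0, hK⟩), rfl⟩

lemma card_nbrs_anchoredGraph_inl (hw : ∀ u i, w u i ≤ K) :
    #(nbrs (anchoredGraph G w K) (Sum.map p id) (.inl a)) = #(nbrs G p a) + ∑ i, w (p a) i := by
  simp only [nbrs, card_filter, Fintype.sum_sum_type, Fintype.sum_prod_type]
  congr 1
  refine sum_congr rfl fun i _ => ?_
  rw [← card_filter]
  convert Fin.card_filter_val_lt.trans (min_eq_right (hw (p a) i))
  simp [anchoredGraph]

lemma posCount_anchoredGraph_inl (hw : ∀ u i, w u i ≤ K) :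
    posCount (anchoredGraph G w K) (anchoredType t K) (Sum.map p id) (.inl a) =
      posCount G t p a + w (p a) (t a) := by
  simp only [posCount, card_filter, Fintype.sum_sum_type, Fintype.sum_prod_type]
  congr 1
  rw [sum_eq_single (t a) (by simp +contextual [anchoredType]) (by simp)]
  simp [anchoredGraph, anchoredType, Fin.card_filter_val_lt, hw]

lemma costAll_anchoredGraph_inl (hτ : 0 ≤ τ) (hw : ∀ u i, w u i ≤ K) :
    costAll (anchoredGraph G w K) (anchoredType t K) τ (Sum.map p id) (.inl a) =
      max 0 (τ - anchoredUtility G w t p a) := by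
  rw [costAll_eq_max hτ, posCount_anchoredGraph_inl hw, card_nbrs_anchoredGraph_inl hw,
    anchoredUtility]

lemma le_posCount_anchoredGraph_inr (x : Fin k × Fin K) :
    K - 1 ≤ posCount (anchoredGraph G w K) (anchoredType t K) (Sum.map p id) (.inr x) := by
  have hclique :
      #((univ.erase x.2).image fun y => (.inr (x.1, y) : A ⊕ Fin k × Fin K)) = K - 1 := by
    rw [card_image_of_injective _ fun y z h => by simpa using h]
    simp
  rw [← hclique]
  refine card_le_card fun b hb => ?_
  obtain ⟨y, hy, rfl⟩ := mem_image.1 hb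
  exact mem_filter.2 ⟨mem_univ _, ⟨rfl, (ne_of_mem_erase hy).symm⟩, rfl⟩

lemma negCountAll_anchoredGraph_inr_le (x : Fin k × Fin K) :
    negCountAll (anchoredGraph G w K) (anchoredType t K) (Sum.map p id) (.inr x) ≤
      Fintype.card A := by
  have hfree : #((univ : Finset A).map (.inl : A ↪ A ⊕ Fin k × Fin K)) = Fintype.card A := by simp
  rw [← hfree]
  refine card_le_card ?_
  rintro (b | y) hb
  · simp
  · obtain ⟨-, ⟨hxy, -⟩, hne⟩ := mem_filter.1 hb
    exact absurd hxy.symm hne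

lemma costAll_anchoredGraph_inr (hτ0 : 0 ≤ τ) (hτ1 : τ < 1)
    (hK : Fintype.card A < (K - 1) * (1 - τ)) (x : Fin k × Fin K) :
    costAll (anchoredGraph G w K) (anchoredType t K) τ (Sum.map p id) (.inr x) = 0 := by
  have hle := le_posCount_anchoredGraph_inr (G := G) (w := w) (t := t) (p := p) x
  have hneg := negCountAll_anchoredGraph_inr_le (G := G) (w := w) (t := t) (p := p) x
  set pos := posCount (anchoredGraph G w K) (anchoredType t K) (Sum.map p id) (.inr x)
  set neg := negCountAll (anchoredGraph G w K) (anchoredType t K) (Sum.map p id) (.inr x)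
  have hK1 : 1 < K := by
    have : (0 : ℝ) < K - 1 := pos_of_mul_pos_left ((Nat.cast_nonneg _).trans_lt hK) (by linarith)
    exact_mod_cast sub_pos.1 this
  refine costAll_eq_zero hτ0 (by lia) ?_
  calc
    τ * neg ≤ 1 * Fintype.card A := by gcongr
    _ ≤ (1 - τ) * (K - 1 : ℕ) := by push_cast [hK1.le]; linarith
    _ ≤ (1 - τ) * pos := by gcongr

lemma sumMap_id_comp_swap_inl {B C : Type*} [DecidableEq B] [DecidableEq (B ⊕ C)] (p : B → U)
    (a b : B) :
    Sum.map p (id : C → C) ∘ Equiv.swap (.inl a) (.inl b) = Sum.map (p ∘ Equiv.swap a b) id := by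
  funext x
  rcases x with x | x
  · rw [Function.comp_apply, ← Sum.inl_injective.map_swap]
    rfl
  · rw [Function.comp_apply, Equiv.swap_apply_of_ne_of_ne Sum.inr_ne_inl Sum.inr_ne_inl]
    rfl

lemma IsTrap.anchor {P : Set (A → U)}
    (hP : IsTrap (fun p a => max 0 (τ - anchoredUtility G w t p a)) P) (hτ0 : 0 ≤ τ) (hτ1 : τ < 1)
    (hw : ∀ u i, w u i ≤ K) (hK : Fintype.card A < (K - 1) * (1 - τ)) :
    IsTrap (costAll (anchoredGraph G w K) (anchoredType t K) τ) ((Sum.map · id) '' P) := by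
  refine hP.image .inl _ (fun p a => costAll_anchoredGraph_inl hτ0 hw)
    (fun p a b => sumMap_id_comp_swap_inl p a b) ?_
  rintro p (b | x) hb q
  · exact absurd ⟨b, rfl⟩ hb
  · exact (costAll_anchoredGraph_inr hτ0 hτ1 hK x).trans_le (costAll_nonneg hτ0)

lemma exists_anchor_clique_size [Finite U] (w : U → Fin k → ℕ) (n : ℕ) (hτ1 : τ < 1) :
    ∃ K : ℕ, (∀ u i, w u i ≤ K) ∧ n < (K - 1) * (1 - τ) := by
  obtain ⟨B, hB⟩ := (Set.finite_range (Function.uncurry w)).bddAbove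
  obtain ⟨m, hm⟩ := exists_nat_gt (n / (1 - τ) + 1)
  refine ⟨max B m, fun u i => (hB ⟨(u, i), rfl⟩).trans (le_max_left _ _), ?_⟩
  rw [← div_lt_iff₀ (sub_pos.2 hτ1), lt_sub_iff_add_lt]
  exact hm.trans_le (by exact_mod_cast le_max_right _ _)

theorem exists_not_reachesStableSwap_of_isTrap {P : Set (A → U)}
    (hP : IsTrap (fun p a => max 0 (τ - anchoredUtility G w t p a)) P) (hp : p ∈ P)
    (hbij : p.Bijective) (hτ0 : 0 ≤ τ) (hτ1 : τ < 1) :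
    ∃ (N : ℕ) (G : SimpleGraph (Fin N)) (t : Fin N → Fin k) (p₀ : Fin N → Fin N),
      t.Surjective ∧ p₀.Bijective ∧ ¬ ReachesStableSwap (costAll G t τ) p₀ := by
  have : Finite U := .of_surjective p hbij.surjective
  obtain ⟨K, hw, hK⟩ := exists_anchor_clique_size w (Fintype.card A) hτ1
  have hKpos : 0 < K := Nat.pos_of_ne_zero fun h => by
    have : (0 : ℝ) ≤ Fintype.card A := Nat.cast_nonneg _
    rw [h, Nat.cast_zero] at hK
    linarith
  have hbij' : (Sum.map p (id : Fin k × Fin K → _)).Bijective := hbij.sumMap Function.bijective_id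
  let eA := Fintype.equivFin (A ⊕ Fin k × Fin K)
  let eU := (Equiv.ofBijective _ hbij').symm.trans eA
  have htrap := (hP.anchor hτ0 hτ1 hw hK).arrowCongr (SimpleGraph.Iso.map eU _) eA
  exact ⟨_, _, _, _, (anchoredType_surjective t hKpos).comp eA.symm.surjective,
    (eU.bijective.comp hbij').comp eA.symm.bijective,
    htrap.not_reachesStableSwap ⟨_, ⟨p, hp, rfl⟩, rfl⟩⟩

end Anchor
section PairGadget

variable {ι : Type*} {π : Equiv.Perm ι} {c : Option Bool ↪ Fin k} {M : ι → ℕ} {τ : ℝ}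

/-- The perfect matching on the pairs of nodes `(j, false)`, `(j, true)` that joins `(j, false)`
to `(π j, true)` for every `j`. -/
def pairGraph (π : Equiv.Perm ι) : SimpleGraph (ι × Bool) where
  Adj u v := v = if u.2 then (π.symm u.1, false) else (π u.1, true)
  symm := ⟨by rintro ⟨i, _ | _⟩ _ rfl <;> simp⟩
  loopless := ⟨by rintro ⟨i, _ | _⟩ h <;> simp at h⟩

/-- The types of the agents `(j, b)` of the gadget. The types `c (some false)` and `c (some true)`
are those of the moving agents, and `c none` is the type of the filler anchors. -/
def pairType (c : Option Bool ↪ Fin k) (a : ι × Bool) : Fin k :=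
  c (some a.2)

/-- The number of anchors of each type at a node of the gadget, where `M j` is a free parameter of
the pair `j`. With the single matching edge the degrees of `(j, false)` and `(j, true)` become
`M j + 3` and `3 * (M j + 3)`. -/
def pairAnchors (c : Option Bool ↪ Fin k) (M : ι → ℕ) (u : ι × Bool) : Fin k → ℕ :=
  Function.extend c
    (fun o => o.elim (if u.2 then 3 * M u.1 else M u.1) fun _ => if u.2 then 4 else 1) 0

/-- The utility of an agent of the gadget. -/
abbrev pairUtility [Fintype ι] (π : Equiv.Perm ι) (c : Option Bool ↪ Fin k) (M : ι → ℕ)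
    (p : ι × Bool → ι × Bool) (a : ι × Bool) : ℝ :=
  anchoredUtility (pairGraph π) (pairAnchors c M) (pairType c) p a

/-- The placement of the gadget in which the two agents of pair `j` are exchanged whenever `x j`
is `true`. -/
def pairPlacement (x : ι → Bool) (a : ι × Bool) : ι × Bool :=
  (a.1, xor a.2 (x a.1))

lemma pairPlacement_involutive (x : ι → Bool) : (pairPlacement x).Involutive := by
  rintro ⟨j, b⟩
  simp [pairPlacement]

lemma pairPlacement_comp_swap (x : ι → Bool) (j : ι) (b : Bool) :
    pairPlacement x ∘ Equiv.swap (j, b) (j, !b) =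
      pairPlacement (Function.update x j (!x j)) := by
  ext1 ⟨i, b'⟩
  by_cases hij : i = j
  · subst hij
    cases b <;> cases b' <;> simp [pairPlacement]
  · simp [pairPlacement, Equiv.swap_apply_def, hij]

lemma sum_pairAnchors (u : ι × Bool) :
    ∑ i, pairAnchors c M u i = if u.2 then 3 * M u.1 + 8 else M u.1 + 2 := by
  rw [← Fintype.sum_of_injective c c.injective _ (pairAnchors c M u)
    (fun _ hi => Function.extend_apply' _ _ _ hi) fun o => (c.injective.extend_apply _ _ o).symm]
  rcases u with ⟨j, _ | _⟩ <;> simp [Fintype.sum_option]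

lemma pairAnchors_pairType (u a : ι × Bool) :
    pairAnchors c M u (pairType c a) = if u.2 then 4 else 1 :=
  c.injective.extend_apply _ _ _

lemma exists_adj_pairGraph (π : Equiv.Perm ι) {p : ι × Bool → ι × Bool} (hp : p.Surjective)
    (a : ι × Bool) : ∃ b, (pairGraph π).Adj (p a) (p b) :=
  hp _

variable [Fintype ι] {p q : ι × Bool → ι × Bool} {a b : ι × Bool}

lemma pairUtility_eq (hp : p.Injective) (hab : (pairGraph π).Adj (p a) (p b)) :
    pairUtility π c M p a =
      ((if b.2 = a.2 then 1 else 0) + if (p a).2 then 4 else 1) /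
        ((if (p a).2 then 3 else 1) * (M (p a).1 + 3)) := by
  have hnbrs : nbrs (pairGraph π) p a = {b} :=
    nbrs_eq_singleton hp fun v => by
      rw [show p b = _ from hab]
      rfl
  have hpos : posCount (pairGraph π) (pairType c) p a = if b.2 = a.2 then 1 else 0 := by
    rw [posCount_eq_card_filter_nbrs, hnbrs, filter_singleton]
    simp only [pairType, EmbeddingLike.apply_eq_iff_eq, Option.some_inj]
    split_ifs <;> rfl
  rw [pairUtility, anchoredUtility, hpos, hnbrs, card_singleton, sum_pairAnchors,
    pairAnchors_pairType]
  push_cast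
  congr 1
  split_ifs <;> ring

lemma pairUtility_mem_Icc (hp : p.Bijective) (a : ι × Bool) :
    pairUtility π c M p a ∈ Set.Icc (1 / (M (p a).1 + 3) : ℝ) (2 / (M (p a).1 + 3)) := by
  obtain ⟨b, hab⟩ := exists_adj_pairGraph π hp.surjective a
  rw [pairUtility_eq hp.injective hab, Set.mem_Icc, div_le_div_iff₀ (by positivity) (by positivity),
    div_le_div_iff₀ (by positivity) (by positivity)]
  constructor <;> split_ifs <;> linarith

lemma pairUtility_mem_Icc_of_apply_eq (hp : p.Bijective) {j : ι} (ha : p a = (j, true)) :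
    pairUtility π c M p a ∈ Set.Icc (4 / (3 * (M j + 3)) : ℝ) (5 / (3 * (M j + 3))) := by
  obtain ⟨b, hab⟩ := exists_adj_pairGraph π hp.surjective a
  rw [pairUtility_eq hp.injective hab, ha]
  simp only [if_true]
  constructor <;> gcongr <;> split_ifs <;> norm_num

lemma pairUtility_pairPlacement (x : ι → Bool) (j : ι) :
    pairUtility π c M (pairPlacement x) (j, x j) =
      ((if x (π j) = x j then 0 else 1) + 1) / (M j + 3) := by
  have hab : (pairGraph π).Adj (pairPlacement x (j, x j)) (pairPlacement x (π j, !x (π j))) := by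
    simp [pairGraph, pairPlacement]
  rw [pairUtility_eq (pairPlacement_involutive x).injective hab]
  cases hj : x j <;> cases hπj : x (π j) <;> simp [pairPlacement, hj]

lemma pairUtility_le_of_two_mul_le (hp : p.Bijective) (hq : q.Bijective)
    (h : 2 * (M (p a).1 + 3) ≤ M (q a).1 + 3) :
    pairUtility π c M q a ≤ pairUtility π c M p a := by
  have h' : (2 * (M (p a).1 + 3) : ℝ) ≤ M (q a).1 + 3 := by exact_mod_cast h
  calc
    pairUtility π c M q a ≤ 2 / (M (q a).1 + 3) := (pairUtility_mem_Icc hq a).2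
    _ ≤ 1 / (M (p a).1 + 3) := by
      rw [div_le_div_iff₀ (by positivity) (by positivity)]
      linarith
    _ ≤ pairUtility π c M p a := (pairUtility_mem_Icc hp a).1

lemma pairUtility_lt_pairPlacement_update {x : ι → Bool} {j : ι} (hj : π j ≠ j)
    (hx : x (π j) = x j) (b : Bool) :
    pairUtility π c M (pairPlacement x) (j, b) <
      pairUtility π c M (pairPlacement (Function.update x j (!x j))) (j, b) := by
  have hbij (x : ι → Bool) := (pairPlacement_involutive x).bijective
  set y := Function.update x j (!x j) with hy
  have hyj : y j = !x j := Function.update_self ..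
  have hyπ : y (π j) = x j := by rw [hy, Function.update_of_ne hj, hx]
  rcases Bool.eq_or_eq_not b (x j) with rfl | rfl
  · calc
      pairUtility π c M (pairPlacement x) (j, x j) = 1 / (M j + 3 : ℝ) := by
        rw [pairUtility_pairPlacement, if_pos hx, zero_add]
      _ < 4 / (3 * (M j + 3)) := by
        rw [div_lt_div_iff₀ (by positivity) (by positivity)]
        linarith
      _ ≤ pairUtility π c M (pairPlacement y) (j, x j) :=
        (pairUtility_mem_Icc_of_apply_eq (hbij y) (by simp [pairPlacement, hyj])).1
  · calc
      pairUtility π c M (pairPlacement x) (j, !x j) ≤ 5 / (3 * (M j + 3) : ℝ) :=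
        (pairUtility_mem_Icc_of_apply_eq (hbij x) (by simp [pairPlacement])).2
      _ < 2 / (M j + 3) := by
        rw [div_lt_div_iff₀ (by positivity) (by positivity)]
        linarith
      _ = pairUtility π c M (pairPlacement y) (j, !x j) := by
        rw [← hyj, pairUtility_pairPlacement, hyπ, hyj, if_neg (by simp), one_add_one_eq_two]

lemma exists_apply_perm_eq_of_odd_card (π : Equiv.Perm ι) (hodd : Odd (Fintype.card ι))
    (x : ι → Bool) : ∃ j, x (π j) = x j := by
  by_contra! hne
  have hcard : #{j | x j = true} = #{j | ¬ x j = true} :=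
    card_equiv π fun j => by simp [Bool.eq_not_of_ne (hne j)]
  have hsum := card_filter_add_card_filter_not (s := univ) fun j => x j = true
  rw [← hcard, card_univ, ← two_mul] at hsum
  exact Nat.not_even_iff_odd.2 hodd (hsum ▸ even_two_mul _)

theorem isTrap_range_pairPlacement (hodd : Odd (Fintype.card ι)) (hπ : ∀ j, π j ≠ j)
    (hsep : Pairwise fun i j => 2 * (M i + 3) ≤ M j + 3 ∨ 2 * (M j + 3) ≤ M i + 3)
    (hτ : ∀ j, 2 / (M j + 3) < τ) :
    IsTrap (fun p a => max 0 (τ - pairUtility π c M p a)) (Set.range pairPlacement) := by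
  have hbij (x : ι → Bool) := (pairPlacement_involutive x).bijective
  rintro _ ⟨x, rfl⟩
  constructor
  · intro hstable
    obtain ⟨j, hj⟩ := exists_apply_perm_eq_of_odd_card π hodd x
    have hlt (b : Bool) :
        max 0 (τ - pairUtility π c M (pairPlacement (Function.update x j (!x j))) (j, b)) <
          max 0 (τ - pairUtility π c M (pairPlacement x) (j, b)) := by
      have hlt_update := pairUtility_lt_pairPlacement_update (c := c) (M := M) (hπ j) hj b
      have hlt_τ : pairUtility π c M (pairPlacement x) (j, b) < τ :=
        (pairUtility_mem_Icc (hbij x) (j, b)).2.trans_lt (hτ j)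
      exact max_lt_max_right_iff.2 ⟨by linarith, by linarith⟩
    exact hstable _ <| improvingSwap_iff.2 ⟨(j, false), (j, true), by simp,
      (pairPlacement_comp_swap x j false).symm, hlt false, hlt true⟩
  · intro q hq
    obtain ⟨⟨i, b⟩, ⟨j, b'⟩, hab, rfl, ha, hb⟩ := improvingSwap_iff.1 hq
    have hqbij := (hbij x).comp (Equiv.swap (i, b) (j, b')).bijective
    obtain rfl : i = j := by
      by_contra hij
      rcases hsep hij with h | h
      · refine ha.not_ge (max_le_max_left 0 (sub_le_sub_left ?_ τ))
        exact pairUtility_le_of_two_mul_le (hbij x) hqbij (by simpa [pairPlacement])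
      · refine hb.not_ge (max_le_max_left 0 (sub_le_sub_left ?_ τ))
        exact pairUtility_le_of_two_mul_le (hbij x) hqbij (by simpa [pairPlacement])
    obtain rfl : b' = !b := Bool.eq_not_of_ne fun h => hab (by rw [h])
    exact ⟨_, (pairPlacement_comp_swap x i b).symm⟩

lemma exists_separated (n : ℕ) (hτ : 0 < τ) :
    ∃ M : Fin n → ℕ, (Pairwise fun i j => 2 * (M i + 3) ≤ M j + 3 ∨ 2 * (M j + 3) ≤ M i + 3) ∧
      ∀ j, 2 / (M j + 3) < τ := by
  obtain ⟨m, hm⟩ := exists_nat_gt (2 / τ)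
  let M (j : Fin n) := 3 ^ (j : ℕ) * (m + 3)
  have hM (j : Fin n) : m + 3 ≤ M j := Nat.le_mul_of_pos_left _ (by positivity)
  have hgrow {i j : Fin n} (hij : i < j) : 2 * (M i + 3) ≤ M j + 3 := by
    have hpow : 3 * M i ≤ M j := by
      rw [← mul_assoc, ← pow_succ']
      exact Nat.mul_le_mul_right _ (Nat.pow_le_pow_right (by norm_num) hij)
    have := hM i
    lia
  refine ⟨M, fun i j hij => hij.lt_or_gt.imp hgrow hgrow, fun j => ?_⟩
  rw [div_lt_comm₀ (by positivity) hτ]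
  exact hm.trans_le (by exact_mod_cast (by have := hM j; lia : m ≤ M j + 3))

end PairGadget

/-- For every `k ≥ 3` and every `τ ∈ (0,1)` there are a graph, `k` surjectively used
agent types on `|A| = |V|` agents and a bijective placement `p₀` from which no finite
sequence of improving swaps of the `1`-`k`-SSG reaches a swap-stable placement, i.e.,
the `1`-`k`-SSG with `k > 2` is not weakly acyclic on arbitrary networks. -/
theorem statement2 (k : ℕ) (hk : 3 ≤ k) (τ : ℝ) (hτ0 : 0 < τ) (hτ1 : τ < 1) :
    ∃ (N : ℕ) (G : SimpleGraph (Fin N)) (t : Fin N → Fin k) (p₀ : Fin N → Fin N),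
      Function.Surjective t ∧ Function.Bijective p₀ ∧
      ¬ ReachesStableSwap (costAll G t τ) p₀ := by
  obtain ⟨c⟩ : Nonempty (Option Bool ↪ Fin k) :=
    Function.Embedding.nonempty_of_card_le (by simpa using hk)
  obtain ⟨M, hsep, hM⟩ := exists_separated 3 hτ0
  have htrap := isTrap_range_pairPlacement (c := c) (π := finRotate 3) (by decide) (by decide)
    hsep hM
  exact exists_not_reachesStableSwap_of_isTrap htrap ⟨fun _ => false, rfl⟩
    (pairPlacement_involutive _).bijective hτ0.le hτ1

end Schelling
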